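/- Let a ≥ 1, let z_0, …, z_{a−1} ∈ ℂ be pairwise distinct and nonzero, let p_0, …, p_{a−1} ∈ ℂ be all nonzero, and define m_k = Σ_{j=0}^{a−1} p_j · z_j^k for k ∈ ℤ. With Y₁ and Y₂ the (a+1) × a Toeplitz matrices Y₁[r,c] = m_{r−c} and Y₂[r,c] = m_{r−c−1} (0 ≤ r ≤ a, 0 ≤ c ≤ a−1), if λ ∈ ℂ and v ∈ ℂ^a with v ≠ 0 satisfy Y₂ v = λ · (Y₁ v), then λ = z_j^{−1} for some j ∈ {0, …, a−1}; i.e., the inverse nodes z_j^{−1} are the only generalized eigenvalues of the pencil Y₂ − λ Y₁. -/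

import Mathlib

open Finset Matrix

/-!
Multiplying the `j`-th weight by `(z j)⁻¹` shifts the moments by one, so the pencil `Y₂ - λ Y₁` is
again the Toeplitz matrix of a moment sequence on the nodes `z j`, now with the weights
`p j * ((z j)⁻¹ - λ)`. Such a matrix factors as (transposed Vandermonde matrix of `z`) * (diagonal
matrix of the weights) * (Vandermonde matrix of `z⁻¹`), so it has trivial kernel unless one of the
weights vanishes, which means that `λ` is an inverse node.
-/

section Vandermonde

variable {R ι : Type*} [CommRing R] [IsDomain R] [Fintype ι] {n : ℕ} {x : ι → R}

theorem eq_zero_of_rectVandermonde_mulVec_eq_zero (hn : n ≤ Fintype.card ι)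
    (hx : Function.Injective x) {v : Fin n → R} (hv : rectVandermonde x 1 n *ᵥ v = 0) :
    v = 0 := by
  obtain ⟨e⟩ : Nonempty (Fin n ↪ ι) :=
    Function.Embedding.nonempty_of_card_le (by rwa [Fintype.card_fin])
  refine eq_zero_of_forall_index_sum_pow_mul_eq_zero (hx.comp e.injective) fun i => ?_
  simpa [mulVec, dotProduct, rectVandermonde_apply] using congrFun hv (e i)

theorem eq_zero_of_vecMul_rectVandermonde_eq_zero (hn : Fintype.card ι ≤ n)
    (hx : Function.Injective x) {w : ι → R} (hw : w ᵥ* rectVandermonde x 1 n = 0) :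
    w = 0 := by
  let e := (Fintype.equivFin ι).symm
  have hwe : w ∘ e = 0 := by
    refine eq_zero_of_forall_pow_sum_mul_pow_eq_zero (hx.comp e.injective) fun i => ?_
    have hi := congrFun hw (i.castLE hn)
    simp only [vecMul, dotProduct, rectVandermonde_apply, Fin.val_castLE, Pi.one_apply, one_pow,
      mul_one, Pi.zero_apply] at hi
    rw [← hi]
    exact e.sum_comp fun j => w j * x j ^ (i : ℕ)
  exact e.surjective.injective_comp_right hwe

end Vandermonde

/-- The `m × n` Toeplitz matrix of a two-sided sequence `s`. The entries of `s` of positive index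
stand below the diagonal. -/
def toeplitz {α : Type*} (m n : ℕ) (s : ℤ → α) : Matrix (Fin m) (Fin n) α :=
  of fun r c => s ((r : ℤ) - (c : ℤ))

section Moments

variable {K ι : Type*} [Field K] [Fintype ι] {m n : ℕ} {z p : ι → K}

/-- The `k`-th moment of the measure with weight `p j` at each node `z j`. Negative moments are
meaningful only for nonzero nodes, as `0⁻¹ = 0`. -/
def moment (z p : ι → K) (k : ℤ) : K :=
  ∑ j, p j * z j ^ k

theorem moment_sub_one_sub_mul (hz0 : ∀ j, z j ≠ 0) (lam : K) (k : ℤ) :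
    moment z p (k - 1) - lam * moment z p k = moment z (fun j => p j * ((z j)⁻¹ - lam)) k := by
  simp only [moment, mul_sum, ← sum_sub_distrib]
  refine sum_congr rfl fun j _ => ?_
  rw [zpow_sub_one₀ (hz0 j)]
  ring

theorem toeplitz_moment_pencil (hz0 : ∀ j, z j ≠ 0) (lam : K) :
    toeplitz m n (fun k => moment z p (k - 1)) - lam • toeplitz m n (moment z p) =
      toeplitz m n (moment z fun j => p j * ((z j)⁻¹ - lam)) := by
  ext r c
  exact moment_sub_one_sub_mul hz0 lam _

theorem toeplitz_moment_eq_mul [DecidableEq ι] (hz0 : ∀ j, z j ≠ 0) :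
    toeplitz m n (moment z p) =
      (rectVandermonde z 1 m)ᵀ * diagonal p * rectVandermonde z⁻¹ 1 n := by
  ext r c
  rw [mul_apply]
  refine sum_congr rfl fun j _ => ?_
  rw [mul_diagonal, transpose_apply, rectVandermonde_apply, rectVandermonde_apply,
    zpow_sub₀ (hz0 j), zpow_natCast, zpow_natCast]
  simp only [Pi.one_apply, one_pow, mul_one, Pi.inv_apply, inv_pow]
  ring

theorem eq_zero_of_toeplitz_moment_mulVec_eq_zero (hn : n ≤ Fintype.card ι)
    (hm : Fintype.card ι ≤ m) (hz0 : ∀ j, z j ≠ 0) (hz : Function.Injective z)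
    (hp : ∀ j, p j ≠ 0) {v : Fin n → K} (hv : toeplitz m n (moment z p) *ᵥ v = 0) :
    v = 0 := by
  classical
  rw [toeplitz_moment_eq_mul hz0, ← mulVec_mulVec, ← mulVec_mulVec, mulVec_transpose] at hv
  have hdiag : diagonal p *ᵥ (rectVandermonde z⁻¹ 1 n *ᵥ v) = 0 :=
    eq_zero_of_vecMul_rectVandermonde_eq_zero hm hz hv
  refine eq_zero_of_rectVandermonde_mulVec_eq_zero hn (inv_injective.comp hz) (funext fun j => ?_)
  have hj := congrFun hdiag j
  rw [mulVec_diagonal] at hj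
  exact (mul_eq_zero.mp hj).resolve_left (hp j)

theorem generalized_eigenvalue_is_inverse_node_general (hn : n ≤ Fintype.card ι)
    (hm : Fintype.card ι ≤ m) (hz0 : ∀ j, z j ≠ 0) (hz : Function.Injective z)
    (hp : ∀ j, p j ≠ 0) {lam : K} {v : Fin n → K} (hv : v ≠ 0)
    (hpencil : toeplitz m n (fun k => moment z p (k - 1)) *ᵥ v =
      lam • toeplitz m n (moment z p) *ᵥ v) :
    ∃ j, lam = (z j)⁻¹ := by
  by_contra! hlam
  have hweights : ∀ j, p j * ((z j)⁻¹ - lam) ≠ 0 := fun j =>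
    mul_ne_zero (hp j) (sub_ne_zero.mpr (hlam j).symm)
  refine hv (eq_zero_of_toeplitz_moment_mulVec_eq_zero hn hm hz0 hz hweights ?_)
  rw [← toeplitz_moment_pencil hz0, sub_mulVec, smul_mulVec, hpencil, sub_self]

end Moments

/-- With pairwise distinct nonzero nodes `z_j`, all-nonzero weights `p_j`
and moments `m_k = Σ_j p_j z_j^k` (`k ∈ ℤ`), consider the `(a+1) × a` Toeplitz matrices
`Y₁[r,c] = m_{r-c}` and `Y₂[r,c] = m_{r-c-1}`. If `λ ∈ ℂ` and `v ≠ 0` satisfy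
`Y₂ v = λ · (Y₁ v)`, then `λ = z_j⁻¹` for some `j`; i.e., the inverse nodes are the
only generalized eigenvalues of the pencil `Y₂ - λ Y₁`. -/
theorem generalized_eigenvalue_is_inverse_node (a : ℕ) (ha : 1 ≤ a)
    (z p : Fin a → ℂ) (hz0 : ∀ j, z j ≠ 0) (hz : Function.Injective z)
    (hp : ∀ j, p j ≠ 0) (lam : ℂ) (v : Fin a → ℂ) (hv : v ≠ 0)
    (hpencil :
      (Matrix.of fun (r : Fin (a + 1)) (c : Fin a) =>
          ∑ k : Fin a, p k * z k ^ ((r : ℤ) - (c : ℤ) - 1)).mulVec v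
        = lam • (Matrix.of fun (r : Fin (a + 1)) (c : Fin a) =>
            ∑ k : Fin a, p k * z k ^ ((r : ℤ) - (c : ℤ))).mulVec v) :
    ∃ j : Fin a, lam = (z j)⁻¹ :=
  generalized_eigenvalue_is_inverse_node_general (Fintype.card_fin a).ge
    ((Fintype.card_fin a).le.trans a.le_succ) hz0 hz hp hv hpencil
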